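/- On a probability space, let f and ε be independent real-valued random variables with f distributed as the Gaussian measure with mean μ and variance σ² (σ > 0) and ε distributed as the Gaussian with mean 0 and variance σ_n² (σ_n > 0), let y = f + ε, fix f∘ ∈ ℝ, and let γ = 1 if f < f∘ and γ = −1 otherwise. Then the mutual information I(y; γ) equals ∫ [ Φ(g(v, f∘))·log( Φ(g(v, f∘)) / Φ(h(f∘)) ) + Φ(−g(v, f∘))·log( Φ(−g(v, f∘)) / Φ(−h(f∘)) ) ] dν(v), where ν is the Gaussian measure with mean μ and variance σ² + σ_n² (the law of y), g(v, c) = ((σ² + σ_n²)·c − σ_n²·μ − σ²·v)/(σ·σ_n·√(σ² + σ_n²)), and h(c) = (c − μ)/σ. -/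

import Mathlib

open MeasureTheory ProbabilityTheory Real

/-- The standard Gaussian cumulative distribution function `Φ`. -/
noncomputable def stdGaussianCDF (t : ℝ) : ℝ :=
  (gaussianReal 0 1 (Set.Iic t)).toReal

/-- The binary entropy function `H_b` (natural logarithm, with `0 · log 0 = 0`). -/
noncomputable def binEnt (p : ℝ) : ℝ :=
  - (p * Real.log p) - (1 - p) * Real.log (1 - p)

/-- Kullback–Leibler divergence between two measures. -/
noncomputable def klDiv {α : Type*} [MeasurableSpace α] (μ ν : Measure α) : ℝ :=
  ∫ x, Real.log (μ.rnDeriv ν x).toReal ∂μ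

/-- Mutual information between two random variables: the KL divergence between the joint law
and the product of the marginal laws. -/
noncomputable def mutualInfo {Ω α β : Type*} [MeasurableSpace Ω] [MeasurableSpace α]
    [MeasurableSpace β] (P : Measure Ω) (A : Ω → α) (B : Ω → β) : ℝ :=
  klDiv (P.map (fun ω => (A ω, B ω))) ((P.map A).prod (P.map B))

/-!
Substituting `f` itself for the threshold in `g(y, ·)` gives an affine function `g(y, f)` of
`(f, ε)` which is standard normal and uncorrelated with `y`, hence independent of `y` because the
pair is jointly Gaussian. As `g(v, ·)` is increasing, `f < f∘` means `g(y, f) < g(y, f∘)`, so the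
posterior probability of `γ = 1` given `y = v` is `Φ(g(v, f∘))`, while its prior probability is
`Φ(h(f∘))`. The density of the law of `(y, γ)` with respect to the product of its marginals is the
ratio posterior / prior; integrating its logarithm over the two labels and then over `y` gives the
formula.
-/

section StandardGaussianCDF

theorem stdGaussianCDF_eq_cdf : stdGaussianCDF = cdf (gaussianReal 0 1) := by
  ext t
  rw [cdf_eq_real, stdGaussianCDF, Measure.real]

theorem measurable_stdGaussianCDF : Measurable stdGaussianCDF := by
  rw [stdGaussianCDF_eq_cdf]
  exact (monotone_cdf _).measurable

theorem stdGaussianCDF_mem_Icc (t : ℝ) : stdGaussianCDF t ∈ Set.Icc 0 1 := by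
  rw [stdGaussianCDF_eq_cdf]
  exact ⟨cdf_nonneg _ t, cdf_le_one _ t⟩

theorem gaussianReal_zero_one_Iio (t : ℝ) :
    gaussianReal 0 1 (Set.Iio t) = ENNReal.ofReal (stdGaussianCDF t) := by
  have := nullSingletonClass_gaussianReal (μ := 0) one_ne_zero
  rw [stdGaussianCDF_eq_cdf, ofReal_cdf, measure_congr Iio_ae_eq_Iic]

theorem stdGaussianCDF_neg (t : ℝ) : stdGaussianCDF (-t) = 1 - stdGaussianCDF t := by
  have hneg : (gaussianReal 0 1).map (fun x => -x) = gaussianReal 0 1 := by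
    rw [gaussianReal_map_neg, neg_zero]
  have hpre : (fun x : ℝ => -x) ⁻¹' Set.Iic (-t) = (Set.Iio t)ᶜ := by
    ext x
    simp
  have hIio : (gaussianReal 0 1).real (Set.Iio t) = stdGaussianCDF t := by
    rw [Measure.real, gaussianReal_zero_one_Iio,
      ENNReal.toReal_ofReal (stdGaussianCDF_mem_Icc t).1]
  calc stdGaussianCDF (-t) = (gaussianReal 0 1).real (Set.Iio t)ᶜ := by
        rw [stdGaussianCDF, ← hneg, Measure.map_apply measurable_neg measurableSet_Iic, hpre,
          hneg, Measure.real]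
    _ = 1 - stdGaussianCDF t := by rw [probReal_compl_eq_one_sub measurableSet_Iio, hIio]

end StandardGaussianCDF

section KullbackLeibler

variable {α : Type*} [MeasurableSpace α] {ν : Measure α} {r : α → ℝ}

theorem klDiv_withDensity_ofReal [SigmaFinite ν] (hr : Measurable r) (hr0 : ∀ x, 0 ≤ r x) :
    klDiv (ν.withDensity fun x => ENNReal.ofReal (r x)) ν = ∫ x, r x * log (r x) ∂ν := by
  rw [klDiv, integral_withDensity_eq_integral_toReal_smul (by fun_prop) (by simp)]
  refine integral_congr_ae ?_
  filter_upwards [Measure.rnDeriv_withDensity ν hr.ennreal_ofReal] with x hx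
  rw [hx, ENNReal.toReal_ofReal (hr0 x), smul_eq_mul]

theorem integrable_mul_log_of_mem_Icc [IsFiniteMeasure ν] (hr : Measurable r) {M : ℝ}
    (hrM : ∀ x, r x ∈ Set.Icc 0 M) : Integrable (fun x => r x * log (r x)) ν := by
  obtain ⟨C, hC⟩ :=
    (isCompact_Icc (a := 0) (b := M)).exists_bound_of_continuousOn continuous_mul_log.continuousOn
  exact Integrable.of_bound (by fun_prop) C (ae_of_all _ fun x => hC (r x) (hrM x))

end KullbackLeibler

section LabelRatio

variable {α β : Type*} {a : α → ℝ}

open Classical in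
/-- The likelihood ratio between the joint law of an observation and a binary label, and the
product of their marginal laws: `c` is one of the two values of the label, `a` its posterior
probability given the observation, and `q`, `q'` are the prior probabilities of `c` and of the
other value. -/
noncomputable def labelRatio (a : α → ℝ) (q q' : ℝ) (c : β) (z : α × β) : ℝ :=
  if z.2 = c then a z.1 / q else (1 - a z.1) / q'

theorem labelRatio_self (a : α → ℝ) (q q' : ℝ) (c : β) (v : α) :
    labelRatio a q q' c (v, c) = a v / q :=
  if_pos rfl

theorem labelRatio_of_ne (a : α → ℝ) (q q' : ℝ) {c d : β} (hdc : d ≠ c) (v : α) :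
    labelRatio a q q' c (v, d) = (1 - a v) / q' :=
  if_neg hdc

theorem labelRatio_mem_Icc {q q' : ℝ} (hq : 0 ≤ q) (hq' : 0 ≤ q')
    (ha01 : ∀ v, a v ∈ Set.Icc 0 1) (c : β) (z : α × β) :
    labelRatio a q q' c z ∈ Set.Icc 0 (1 / q + 1 / q') := by
  obtain ⟨h0, h1⟩ := ha01 z.1
  have hq_inv : 0 ≤ 1 / q := by positivity
  have hq'_inv : 0 ≤ 1 / q' := by positivity
  unfold labelRatio
  split_ifs
  · have : a z.1 / q ≤ 1 / q := by gcongr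
    exact ⟨div_nonneg h0 hq, by linarith⟩
  · have : (1 - a z.1) / q' ≤ 1 / q' := by gcongr; linarith
    exact ⟨div_nonneg (by linarith) hq', by linarith⟩

end LabelRatio

section BinaryLabel

variable {Ω α β : Type*} [MeasurableSpace Ω] [MeasurableSpace α] [MeasurableSpace β]
  {P : Measure Ω} {Y : Ω → α} {p : Ω → Prop} {a : α → ℝ}

theorem withDensity_prod_dirac {ν : Measure α} [SFinite ν] {r : α × β → ENNReal}
    (hr : Measurable r) (c : β) :
    (ν.prod (.dirac c)).withDensity r =
      (ν.withDensity fun v => r (v, c)).prod (.dirac c) := by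
  ext s hs
  have hs' : MeasurableSet ((fun v => (v, c)) ⁻¹' s) := hs.preimage (by fun_prop)
  rw [Measure.prod_dirac, Measure.prod_dirac, withDensity_apply _ hs,
    setLIntegral_map hs hr (by fun_prop), Measure.map_apply (by fun_prop) hs,
    withDensity_apply _ hs']

theorem map_ite [DecidablePred p] (hp : MeasurableSet {ω | p ω}) {X Z : Ω → β}
    (hX : Measurable X) (hZ : Measurable Z) :
    P.map (fun ω => if p ω then X ω else Z ω) =
      (P.restrict {ω | p ω}).map X + (P.restrict {ω | p ω}ᶜ).map Z := by
  nth_rw 1 [← Measure.restrict_add_restrict_compl (μ := P) hp]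
  rw [Measure.map_add _ _ (hX.ite hp hZ)]
  congr 1 <;> refine Measure.map_congr ?_
  · filter_upwards [ae_restrict_mem hp] with ω hω using if_pos hω
  · filter_upwards [ae_restrict_mem hp.compl] with ω hω using if_neg hω

theorem map_ite_const [DecidablePred p] (hp : MeasurableSet {ω | p ω}) (c d : β) :
    P.map (fun ω => if p ω then c else d) =
      P {ω | p ω} • Measure.dirac c + P {ω | p ω}ᶜ • Measure.dirac d := by
  rw [map_ite hp measurable_const measurable_const]
  simp

theorem map_prodMk_ite_const [SFinite P] [DecidablePred p] (hp : MeasurableSet {ω | p ω})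
    (hY : Measurable Y) (c d : β) :
    P.map (fun ω => (Y ω, if p ω then c else d)) =
      ((P.restrict {ω | p ω}).map Y).prod (.dirac c) +
        ((P.restrict {ω | p ω}ᶜ).map Y).prod (.dirac d) := by
  simp_rw [apply_ite (Prod.mk (Y _))]
  rw [map_ite hp (by fun_prop) (by fun_prop), Measure.prod_dirac, Measure.prod_dirac,
    Measure.map_map (by fun_prop) hY, Measure.map_map (by fun_prop) hY]
  rfl

theorem map_restrict_compl_eq_withDensity [IsFiniteMeasure P] {A : Set Ω} (hA : MeasurableSet A)
    (hY : Measurable Y) (ha : Measurable a) (ha01 : ∀ v, a v ∈ Set.Icc 0 1)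
    (hpost : (P.restrict A).map Y = (P.map Y).withDensity fun v => ENNReal.ofReal (a v)) :
    (P.restrict Aᶜ).map Y = (P.map Y).withDensity fun v => ENNReal.ofReal (1 - a v) := by
  have hsum : ((fun v => ENNReal.ofReal (a v)) + fun v => ENNReal.ofReal (1 - a v)) = 1 := by
    ext v
    simp [← ENNReal.ofReal_add (ha01 v).1 (sub_nonneg.2 (ha01 v).2)]
  rw [← Measure.add_right_inj ((P.restrict A).map Y), ← Measure.map_add _ _ hY,
    Measure.restrict_add_restrict_compl hA, hpost, ← withDensity_add_left (by fun_prop), hsum,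
    withDensity_one]

-- Dividing by `P A` is harmless when `P A = 0`, since both sides are then zero.
theorem map_restrict_eq_smul_withDensity_div [IsFiniteMeasure P] {A : Set Ω}
    (hpost : (P.restrict A).map Y = (P.map Y).withDensity fun v => ENNReal.ofReal (a v)) :
    (P.restrict A).map Y =
      P A • (P.map Y).withDensity fun v => ENNReal.ofReal (a v / P.real A) := by
  rcases eq_or_ne (P A) 0 with hA | hA
  · simp [hA, Measure.restrict_eq_zero.2 hA]
  · have hA' : 0 < P.real A := ENNReal.toReal_pos hA (measure_ne_top P A)
    rw [hpost, ← withDensity_smul' _ _ (measure_ne_top P A)]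
    congr with v
    rw [Pi.smul_apply, smul_eq_mul, ← ofReal_measureReal, ← ENNReal.ofReal_mul hA'.le,
      mul_div_cancel₀ _ hA'.ne']

variable [MeasurableSingletonClass β]

theorem measurable_labelRatio (ha : Measurable a) (q q' : ℝ) (c : β) :
    Measurable (labelRatio a q q' c) := by
  classical
  unfold labelRatio
  exact Measurable.ite (measurable_snd (measurableSet_singleton c)) (by fun_prop) (by fun_prop)

theorem map_prodMk_ite_const_eq_withDensity [IsFiniteMeasure P] [DecidablePred p]
    (hp : MeasurableSet {ω | p ω}) (hY : Measurable Y) (ha : Measurable a)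
    (ha01 : ∀ v, a v ∈ Set.Icc 0 1)
    (hpost : (P.restrict {ω | p ω}).map Y = (P.map Y).withDensity fun v => ENNReal.ofReal (a v))
    {c d : β} (hdc : d ≠ c) :
    P.map (fun ω => (Y ω, if p ω then c else d)) =
      ((P.map Y).prod (P.map fun ω => if p ω then c else d)).withDensity fun z =>
        ENNReal.ofReal (labelRatio a (P.real {ω | p ω}) (P.real {ω | p ω}ᶜ) c z) := by
  have hr := (measurable_labelRatio ha (P.real {ω | p ω}) (P.real {ω | p ω}ᶜ) c).ennreal_ofReal
  have hpost' := map_restrict_compl_eq_withDensity hp hY ha ha01 hpost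
  have := Measure.smul_finite (.dirac c) (measure_ne_top P {ω | p ω})
  have := Measure.smul_finite (.dirac d) (measure_ne_top P {ω | p ω}ᶜ)
  rw [map_prodMk_ite_const hp hY, map_ite_const hp, Measure.prod_add, withDensity_add_measure]
  simp_rw [Measure.prod_smul_right, withDensity_smul_measure, withDensity_prod_dirac hr,
    labelRatio_self, labelRatio_of_ne _ _ _ hdc]
  rw [map_restrict_eq_smul_withDensity_div hpost, map_restrict_eq_smul_withDensity_div hpost',
    Measure.prod_smul_left, Measure.prod_smul_left]

theorem integral_smul_dirac_add_smul_dirac {μ₁ μ₂ : ENNReal} (h₁ : μ₁ ≠ ⊤) (h₂ : μ₂ ≠ ⊤)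
    (φ : β → ℝ) (c d : β) :
    ∫ x, φ x ∂(μ₁ • Measure.dirac c + μ₂ • Measure.dirac d) =
      μ₁.toReal * φ c + μ₂.toReal * φ d := by
  rw [integral_add_measure ((integrable_dirac (by simp)).smul_measure h₁)
      ((integrable_dirac (by simp)).smul_measure h₂), integral_smul_measure,
    integral_smul_measure, integral_dirac, integral_dirac, smul_eq_mul, smul_eq_mul]

theorem mutualInfo_ite_const [IsFiniteMeasure P] [DecidablePred p]
    (hp : MeasurableSet {ω | p ω}) (hY : Measurable Y) (ha : Measurable a)
    (ha01 : ∀ v, a v ∈ Set.Icc 0 1)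
    (hpost : (P.restrict {ω | p ω}).map Y = (P.map Y).withDensity fun v => ENNReal.ofReal (a v))
    {c d : β} (hdc : d ≠ c) :
    mutualInfo P Y (fun ω => if p ω then c else d) =
      ∫ v, (a v * log (a v / P.real {ω | p ω}) +
        (1 - a v) * log ((1 - a v) / P.real {ω | p ω}ᶜ)) ∂(P.map Y) := by
  have hr := measurable_labelRatio ha (P.real {ω | p ω}) (P.real {ω | p ω}ᶜ) c
  have hrM := labelRatio_mem_Icc (q := P.real {ω | p ω}) (q' := P.real {ω | p ω}ᶜ)
    measureReal_nonneg measureReal_nonneg ha01 c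
  have mul_div_mul_log (q x : ℝ) : q * (x / q * log (x / q)) = x * log (x / q) := by
    rcases eq_or_ne q 0 with rfl | hq
    · simp
    · rw [← mul_assoc, mul_div_cancel₀ _ hq]
  rw [mutualInfo, map_prodMk_ite_const_eq_withDensity hp hY ha ha01 hpost hdc,
    klDiv_withDensity_ofReal hr fun z => (hrM z).1,
    integral_prod _ (integrable_mul_log_of_mem_Icc hr hrM)]
  refine integral_congr_ae (ae_of_all _ fun v => ?_)
  simp only [map_ite_const hp, integral_smul_dirac_add_smul_dirac (measure_ne_top P _)
    (measure_ne_top P _), labelRatio_self, labelRatio_of_ne _ _ _ hdc, ← Measure.real_def,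
    mul_div_mul_log]

end BinaryLabel

section Gaussian

variable {Ω α β : Type*} [MeasurableSpace Ω] [MeasurableSpace α] [MeasurableSpace β]
  {P : Measure Ω}

theorem map_restrict_prodMk_mem_of_indepFun [IsFiniteMeasure P] {Y : Ω → α} {Z : Ω → β}
    (hY : Measurable Y) (hZ : Measurable Z) (hYZ : IndepFun Y Z P) {T : Set (α × β)}
    (hT : MeasurableSet T) :
    (P.restrict {ω | (Y ω, Z ω) ∈ T}).map Y =
      (P.map Y).withDensity fun v => P.map Z (Prod.mk v ⁻¹' T) := by
  ext s hs
  have hsT : MeasurableSet (Prod.fst ⁻¹' s ∩ T) := (measurable_fst hs).inter hT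
  calc (P.restrict {ω | (Y ω, Z ω) ∈ T}).map Y s
      = P.map (fun ω => (Y ω, Z ω)) (Prod.fst ⁻¹' s ∩ T) := by
        rw [Measure.map_apply hY hs, Measure.restrict_apply (hY hs),
          Measure.map_apply (hY.prodMk hZ) hsT]
        rfl
    _ = ∫⁻ v, P.map Z (Prod.mk v ⁻¹' (Prod.fst ⁻¹' s ∩ T)) ∂(P.map Y) := by
        rw [(indepFun_iff_map_prod_eq_prod_map_map hY.aemeasurable hZ.aemeasurable).1 hYZ,
          Measure.prod_apply hsT]
    _ = ∫⁻ v, s.indicator (fun v => P.map Z (Prod.mk v ⁻¹' T)) v ∂(P.map Y) := by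
        refine lintegral_congr fun v => ?_
        by_cases hv : v ∈ s <;> simp [hv, Set.preimage_inter, Set.preimage_preimage]
    _ = _ := by rw [lintegral_indicator hs, withDensity_apply _ hs]

-- Decorrelating two jointly Gaussian variables makes them independent.
theorem indepFun_add_variance_smul_sub {X Y : Ω → ℝ} (hX : HasGaussianLaw X P)
    (hY : HasGaussianLaw Y P) (hXY : IndepFun X Y P) :
    IndepFun (X + Y) (Var[Y; P] • X - Var[X; P] • Y) P := by
  have := hX.isProbabilityMeasure
  have hX2 := hX.memLp_two
  have hY2 := hY.memLp_two
  have hXYcov : cov[X, Y; P] = 0 := hXY.covariance_eq_zero hX2 hY2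
  have hcov : cov[X + Y, Var[Y; P] • X - Var[X; P] • Y; P] = 0 := by
    rw [covariance_sub_right (hX2.add hY2) (hX2.const_smul _) (hY2.const_smul _),
      covariance_smul_right, covariance_smul_right, covariance_add_left hX2 hY2 hX2,
      covariance_add_left hX2 hY2 hY2, covariance_comm Y X, hXYcov,
      covariance_self hX.aemeasurable, covariance_self hY.aemeasurable]
    ring
  have hjoint : HasGaussianLaw
      (fun ω => ((X + Y) ω, (Var[Y; P] • X - Var[X; P] • Y) ω)) P :=
    (hXY.hasGaussianLaw hX hY).map_fun
      ((ContinuousLinearMap.fst ℝ ℝ ℝ + ContinuousLinearMap.snd ℝ ℝ ℝ).prod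
        (Var[Y; P] • ContinuousLinearMap.fst ℝ ℝ ℝ - Var[X; P] • ContinuousLinearMap.snd ℝ ℝ ℝ))
  exact hjoint.indepFun_of_covariance_eq_zero hcov

theorem hasLaw_sub_div_gaussianReal_zero_one {X : Ω → ℝ} {μ σ : ℝ} (hσ : σ ≠ 0)
    (hX : HasLaw X (gaussianReal μ (σ ^ 2).toNNReal) P) :
    HasLaw (fun ω => (X ω - μ) / σ) (gaussianReal 0 1) P := by
  convert gaussianReal_div_const (gaussianReal_sub_const hX μ) σ using 2
  · simp
  · ext
    simp [hσ, sq_nonneg]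

end Gaussian

section Posterior

/-- The paper's `g(v, c)`: the standardization `(c - E[f | y = v]) / √Var[f | y = v]` of `c` under
the posterior law of `f ~ N(μ, σ²)` given a noisy observation `y = f + ε` with `ε ~ N(0, σn²)`,
with denominators cleared. -/
noncomputable def posteriorScore (μ σ σn c v : ℝ) : ℝ :=
  ((σ ^ 2 + σn ^ 2) * c - σn ^ 2 * μ - σ ^ 2 * v) / (σ * σn * √(σ ^ 2 + σn ^ 2))

theorem posteriorScore_add (μ σ σn x e : ℝ) :
    posteriorScore μ σ σn x (x + e) =
      (σn ^ 2 * x - σ ^ 2 * e - σn ^ 2 * μ) / (σ * σn * √(σ ^ 2 + σn ^ 2)) := by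
  unfold posteriorScore
  ring

theorem posteriorScore_strictMono {μ σ σn : ℝ} (hσ : 0 < σ) (hσn : 0 < σn) (v : ℝ) :
    StrictMono fun c => posteriorScore μ σ σn c v := by
  intro c d hcd
  simp only [posteriorScore]
  gcongr

variable {Ω : Type*} [MeasurableSpace Ω] {P : Measure Ω} {f ε : Ω → ℝ} {μ σ σn : ℝ}

theorem hasLaw_posteriorScore (hσ : σ ≠ 0) (hσn : σn ≠ 0)
    (hf : HasLaw f (gaussianReal μ (σ ^ 2).toNNReal) P)
    (hε : HasLaw ε (gaussianReal 0 (σn ^ 2).toNNReal) P) (hindep : IndepFun f ε P) :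
    HasLaw (fun ω => posteriorScore μ σ σn (f ω) (f ω + ε ω)) (gaussianReal 0 1) P := by
  have hsum := hindep.comp (φ := (σn ^ 2 * ·)) (ψ := (-σ ^ 2 * ·)) (by fun_prop) (by fun_prop)
  have hlaw : HasLaw (fun ω => σn ^ 2 * f ω + -σ ^ 2 * ε ω)
      (gaussianReal (σn ^ 2 * μ) ((σ * σn * √(σ ^ 2 + σn ^ 2)) ^ 2).toNNReal) P := by
    have hf' := gaussianReal_const_mul hf (σn ^ 2)
    have hε' := gaussianReal_const_mul hε (-σ ^ 2)
    refine ⟨hf'.aemeasurable.add hε'.aemeasurable,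
      (gaussianReal_add_gaussianReal_of_indepFun hsum hf'.map_eq hε'.map_eq).trans ?_⟩
    congr 1
    · ring
    · ext
      simp only [NNReal.coe_add, NNReal.coe_mul, NNReal.coe_mk, coe_toNNReal _ (sq_nonneg _)]
      rw [mul_pow, sq_sqrt (by positivity)]
      ring
  convert hasLaw_sub_div_gaussianReal_zero_one (by positivity) hlaw using 2 with ω
  rw [posteriorScore_add]
  ring

theorem indepFun_add_posteriorScore (hf : HasLaw f (gaussianReal μ (σ ^ 2).toNNReal) P)
    (hε : HasLaw ε (gaussianReal 0 (σn ^ 2).toNNReal) P) (hindep : IndepFun f ε P) :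
    IndepFun (f + ε) (fun ω => posteriorScore μ σ σn (f ω) (f ω + ε ω)) P := by
  have hvarf : Var[f; P] = σ ^ 2 := by
    rw [hf.variance_eq, variance_id_gaussianReal, coe_toNNReal _ (sq_nonneg σ)]
  have hvarε : Var[ε; P] = σn ^ 2 := by
    rw [hε.variance_eq, variance_id_gaussianReal, coe_toNNReal _ (sq_nonneg σn)]
  have hdecorr := indepFun_add_variance_smul_sub hf.hasGaussianLaw hε.hasGaussianLaw hindep
  rw [hvarf, hvarε] at hdecorr
  simp_rw [posteriorScore_add]
  exact hdecorr.comp (φ := id) (ψ := fun t => (t - σn ^ 2 * μ) / (σ * σn * √(σ ^ 2 + σn ^ 2)))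
    measurable_id (by fun_prop)

theorem map_restrict_lt_eq_withDensity_posteriorScore [IsFiniteMeasure P] (hσ : 0 < σ)
    (hσn : 0 < σn) (hfm : Measurable f) (hεm : Measurable ε)
    (hf : HasLaw f (gaussianReal μ (σ ^ 2).toNNReal) P)
    (hε : HasLaw ε (gaussianReal 0 (σn ^ 2).toNNReal) P) (hindep : IndepFun f ε P) (c : ℝ) :
    (P.restrict {ω | f ω < c}).map (f + ε) = (P.map (f + ε)).withDensity fun v =>
      ENNReal.ofReal (stdGaussianCDF (posteriorScore μ σ σn c v)) := by
  set Z : Ω → ℝ := fun ω => posteriorScore μ σ σn (f ω) (f ω + ε ω)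
  set T : Set (ℝ × ℝ) := {z | z.2 < posteriorScore μ σ σn c z.1}
  have hT : MeasurableSet T :=
    measurableSet_lt measurable_snd (by unfold posteriorScore; fun_prop)
  have hZ : Measurable Z := by unfold Z posteriorScore; fun_prop
  have hlt : {ω | f ω < c} = {ω | ((f + ε) ω, Z ω) ∈ T} := by
    ext ω
    exact ((posteriorScore_strictMono hσ hσn (f ω + ε ω)).lt_iff_lt).symm
  rw [hlt, map_restrict_prodMk_mem_of_indepFun (hfm.add hεm) hZ
    (indepFun_add_posteriorScore hf hε hindep) hT,
    (hasLaw_posteriorScore hσ.ne' hσn.ne' hf hε hindep).map_eq]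
  simp_rw [← gaussianReal_zero_one_Iio]
  rfl

theorem measureReal_lt_eq_stdGaussianCDF (hσ : 0 < σ)
    (hf : HasLaw f (gaussianReal μ (σ ^ 2).toNNReal) P) (c : ℝ) :
    P.real {ω | f ω < c} = stdGaussianCDF ((c - μ) / σ) := by
  have hlt : {ω | f ω < c} = {ω | (f ω - μ) / σ < (c - μ) / σ} := by
    simp only [div_lt_div_iff_of_pos_right hσ, sub_lt_sub_iff_right]
  rw [hlt, (hasLaw_sub_div_gaussianReal_zero_one hσ.ne' hf).measureReal_eq measurableSet_Iio]
  exact (congrArg _ (gaussianReal_zero_one_Iio _)).trans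
    (ENNReal.toReal_ofReal (stdGaussianCDF_mem_Icc _).1)

theorem map_add_eq_gaussianReal (hf : HasLaw f (gaussianReal μ (σ ^ 2).toNNReal) P)
    (hε : HasLaw ε (gaussianReal 0 (σn ^ 2).toNNReal) P) (hindep : IndepFun f ε P) :
    P.map (f + ε) = gaussianReal μ (σ ^ 2 + σn ^ 2).toNNReal := by
  rw [gaussianReal_add_gaussianReal_of_indepFun hindep hf.map_eq hε.map_eq, add_zero,
    toNNReal_add (sq_nonneg σ) (sq_nonneg σn)]

end Posterior

/-- Closed form of the BES criterion. For independent `f ~ N(μ, σ²)` and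
`ε ~ N(0, σ_n²)`, `y = f + ε`, threshold `f∘`, and class label `γ = 1` if `f < f∘`
else `-1`, the mutual information `I(y; γ)` equals
`∫ [Φ(g(v,f∘)) log(Φ(g(v,f∘))/Φ(h(f∘))) + Φ(-g(v,f∘)) log(Φ(-g(v,f∘))/Φ(-h(f∘)))] dν(v)`
with `ν = N(μ, σ² + σ_n²)`, `g(v,c) = ((σ²+σ_n²)c - σ_n²μ - σ²v)/(σ σ_n √(σ²+σ_n²))`,
`h(c) = (c - μ)/σ`. -/
theorem bes_closed_form {Ω : Type*} [MeasurableSpace Ω]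
    (P : Measure Ω) [IsProbabilityMeasure P]
    (f ε : Ω → ℝ) (hf : Measurable f) (hε : Measurable ε)
    (hindep : IndepFun f ε P) (μ σ σn : ℝ) (hσ : 0 < σ) (hσn : 0 < σn)
    (hfl : P.map f = gaussianReal μ (Real.toNNReal (σ ^ 2)))
    (hεl : P.map ε = gaussianReal 0 (Real.toNNReal (σn ^ 2)))
    (f₀ : ℝ) :
    mutualInfo P (f + ε) (fun ω => if f ω < f₀ then (1 : ℝ) else -1) =
      ∫ v,
        (stdGaussianCDF (((σ ^ 2 + σn ^ 2) * f₀ - σn ^ 2 * μ - σ ^ 2 * v) /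
            (σ * σn * Real.sqrt (σ ^ 2 + σn ^ 2))) *
          Real.log
            (stdGaussianCDF (((σ ^ 2 + σn ^ 2) * f₀ - σn ^ 2 * μ - σ ^ 2 * v) /
                (σ * σn * Real.sqrt (σ ^ 2 + σn ^ 2))) /
              stdGaussianCDF ((f₀ - μ) / σ)) +
          stdGaussianCDF (-(((σ ^ 2 + σn ^ 2) * f₀ - σn ^ 2 * μ - σ ^ 2 * v) /
            (σ * σn * Real.sqrt (σ ^ 2 + σn ^ 2)))) *
          Real.log
            (stdGaussianCDF (-(((σ ^ 2 + σn ^ 2) * f₀ - σn ^ 2 * μ - σ ^ 2 * v) /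
                (σ * σn * Real.sqrt (σ ^ 2 + σn ^ 2)))) /
              stdGaussianCDF (-((f₀ - μ) / σ))))
        ∂(gaussianReal μ (Real.toNNReal (σ ^ 2 + σn ^ 2))) := by
  have hfL : HasLaw f (gaussianReal μ (σ ^ 2).toNNReal) P := ⟨hf.aemeasurable, hfl⟩
  have hεL : HasLaw ε (gaussianReal 0 (σn ^ 2).toNNReal) P := ⟨hε.aemeasurable, hεl⟩
  have hlt : MeasurableSet {ω | f ω < f₀} := measurableSet_lt hf measurable_const
  have hprior : P.real {ω | f ω < f₀} = stdGaussianCDF ((f₀ - μ) / σ) :=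
    measureReal_lt_eq_stdGaussianCDF hσ hfL f₀
  have hpost := map_restrict_lt_eq_withDensity_posteriorScore hσ hσn hf hε hfL hεL hindep f₀
  have hmeas : Measurable fun v => stdGaussianCDF (posteriorScore μ σ σn f₀ v) :=
    measurable_stdGaussianCDF.comp (by unfold posteriorScore; fun_prop)
  rw [mutualInfo_ite_const hlt (hf.add hε) hmeas (fun _ => stdGaussianCDF_mem_Icc _) hpost
    (by norm_num), probReal_compl_eq_one_sub hlt, hprior,
    map_add_eq_gaussianReal hfL hεL hindep]
  simp_rw [← stdGaussianCDF_neg]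
  rfl
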